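/- Let p, q ∈ ℝ[x], let σ0 ∈ QM(c_in), and set h = p − σ0. Assume: (a) there exist an integer k1 ≥ 1 and σ1 ∈ Σ[x] such that h^{2k1} + σ1 ∈ Ideal(c_eq); (b) there exists δ > 0 such that q − δ ∈ Ideal(c_eq) + QM(c_in). Then there exists k0 ∈ ℕ such that for every real λ with 0 < λ ≤ 1, λq + (1−λ)p ∈ Ideal(c_eq)_{2k0} + QM(c_in)_{2k0}. -/

import Mathlib

open MvPolynomial MeasureTheory

noncomputable section

/-- The space of real polynomials in `n` variables. -/
abbrev RPoly (n : ℕ) : Type := MvPolynomial (Fin n) ℝ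

/-- The degree `|α|` of a monomial power `α`. -/
def mdeg {n : ℕ} (α : Fin n →₀ ℕ) : ℕ := ∑ i, α i

/-- `p` is a sum of squares of polynomials. -/
def IsSOS {n : ℕ} (p : RPoly n) : Prop :=
  ∃ L : List (RPoly n), p = (L.map (fun q => q ^ 2)).sum

/-- The truncation `QM(g)_k` of the quadratic module generated by `(g j)_{j ∈ S}`. -/
def QModDeg {n : ℕ} {κ : Type} (S : Finset κ) (g : κ → RPoly n) (k : ℕ) :
    Set (RPoly n) :=
  {p | ∃ σ0 : RPoly n, ∃ σ : κ → RPoly n,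
      IsSOS σ0 ∧ σ0.totalDegree ≤ k ∧
      (∀ j ∈ S, IsSOS (σ j) ∧ (σ j).totalDegree + (g j).totalDegree ≤ k) ∧
      p = σ0 + ∑ j ∈ S, g j * σ j}

/-- The truncation `Ideal(h)_k` of the ideal generated by `(h j)_{j ∈ S}`. -/
def IdealDeg {n : ℕ} {ι : Type} (S : Finset ι) (h : ι → RPoly n) (k : ℕ) :
    Set (RPoly n) :=
  {p | ∃ q : ι → RPoly n,
      (∀ j ∈ S, (q j).totalDegree + (h j).totalDegree ≤ k) ∧
      p = ∑ j ∈ S, h j * q j}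

/-- The quadratic module `QM(g)` generated by `(g j)_{j ∈ S}`. -/
def QModFull {n : ℕ} {κ : Type} (S : Finset κ) (g : κ → RPoly n) : Set (RPoly n) :=
  {p | ∃ σ0 : RPoly n, ∃ σ : κ → RPoly n,
      IsSOS σ0 ∧ (∀ j ∈ S, IsSOS (σ j)) ∧ p = σ0 + ∑ j ∈ S, g j * σ j}

/-- The ideal `Ideal(h)` generated by `(h j)_{j ∈ S}`. -/
def IdealFull {n : ℕ} {ι : Type} (S : Finset ι) (h : ι → RPoly n) : Set (RPoly n) :=
  (Ideal.span (h '' (S : Set ι)) : Ideal (RPoly n))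

/-- `Ideal(c_eq) + QM(c_in)` is archimedean. -/
def ArchimedeanQM {n : ℕ} (E I : Finset ℕ) (c : ℕ → RPoly n) : Prop :=
  ∃ R : ℝ, 0 < R ∧ ∃ p1 ∈ IdealFull E c, ∃ p2 ∈ QModFull I c,
    (C R : RPoly n) - ∑ i, (X i : RPoly n) ^ 2 = p1 + p2

/-- The basic closed semialgebraic set `K`. -/
def Kset {n : ℕ} (E I : Finset ℕ) (c : ℕ → RPoly n) : Set (Fin n → ℝ) :=
  {x | (∀ j ∈ E, eval x (c j) = 0) ∧ (∀ j ∈ I, 0 ≤ eval x (c j))}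

/-- The bilinear pairing `⟨p, y⟩ = ∑_α p_α y_α`. -/
def pairing {n : ℕ} (p : RPoly n) (y : (Fin n →₀ ℕ) → ℝ) : ℝ :=
  ∑ α ∈ p.support, p.coeff α * y α

/-- Membership in the moment cone `ℛ_d(K)`: the entries `y_α`, `|α| ≤ d`, are the
moments of a finite Borel measure supported in the closed set `K`. -/
def InMomentCone {n : ℕ} (d : ℕ) (K : Set (Fin n → ℝ)) (y : (Fin n →₀ ℕ) → ℝ) : Prop :=
  ∃ μ : Measure (Fin n → ℝ), IsFiniteMeasure μ ∧ μ Kᶜ = 0 ∧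
    ∀ α : Fin n →₀ ℕ, mdeg α ≤ d →
      Integrable (fun x => ∏ i, x i ^ α i) μ ∧
      y α = ∫ x, (∏ i, x i ^ α i) ∂μ

/-- The cone `P_d(K)` of polynomials of degree at most `d` that are nonnegative on `K`. -/
def PdCone {n : ℕ} (d : ℕ) (K : Set (Fin n → ℝ)) : Set (RPoly n) :=
  {p | p.totalDegree ≤ d ∧ ∀ x ∈ K, 0 ≤ eval x p}

/-- The interior of `P_d(K)` in the coefficient topology of `ℝ[x]_d`. -/
def PdInterior {n : ℕ} (d : ℕ) (K : Set (Fin n → ℝ)) : Set (RPoly n) :=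
  {p | p.totalDegree ≤ d ∧ ∃ ε : ℝ, 0 < ε ∧ ∀ q : RPoly n, q.totalDegree ≤ d →
      (∀ α : Fin n →₀ ℕ, |q.coeff α - p.coeff α| ≤ ε) → ∀ x ∈ K, 0 ≤ eval x q}

instance degLEFintype (n t : ℕ) : Fintype {α : Fin n →₀ ℕ // mdeg α ≤ t} := by
  apply Fintype.ofInjective
    (fun a : {α : Fin n →₀ ℕ // mdeg α ≤ t} =>
      (fun i => (⟨a.1 i, by
        have h1 : a.1 i ≤ mdeg a.1 :=
          Finset.single_le_sum (fun j _ => Nat.zero_le _) (Finset.mem_univ i)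
        exact Nat.lt_succ_of_le (le_trans h1 a.2)⟩ : Fin (t + 1))) :
        {α : Fin n →₀ ℕ // mdeg α ≤ t} → (Fin n → Fin (t + 1)))
  intro a b hab
  apply Subtype.ext
  ext i
  exact congrArg Fin.val (congrFun hab i)

/-- The moment matrix `M_t[w]`, indexed by monomial powers of degree at most `t`. -/
def momentMatrix {n : ℕ} (t : ℕ) (w : (Fin n →₀ ℕ) → ℝ) :
    Matrix {α : Fin n →₀ ℕ // mdeg α ≤ t} {α : Fin n →₀ ℕ // mdeg α ≤ t} ℝ :=
  fun α β => w (α.1 + β.1)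

/-- `w` admits a flat truncation: for some `d0 ≤ t ≤ k`,
`rank M_{t-dK}[w] = rank M_t[w]`. -/
def HasFlatTruncation {n : ℕ} (d0 dK k : ℕ) (w : (Fin n →₀ ℕ) → ℝ) : Prop :=
  ∃ t : ℕ, d0 ≤ t ∧ t ≤ k ∧
    (momentMatrix (t - dK) w).rank = (momentMatrix t w).rank

/-- The gradient of a polynomial at a point. -/
def gradP {n : ℕ} (p : RPoly n) (u : Fin n → ℝ) : Fin n → ℝ :=
  fun i => eval u (pderiv i p)

/-- The Hessian of a polynomial at a point. -/
def hessP {n : ℕ} (p : RPoly n) (u : Fin n → ℝ) : Fin n → Fin n → ℝ :=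
  fun i j => eval u (pderiv i (pderiv j p))

/-- The classical optimality conditions (LICQC, KKT with SCC and SOSC) at the point `u`
for the problem: minimize `F` subject to `ge j = 0` (`j ∈ Es`), `gi j ≥ 0` (`j ∈ Is`). -/
def OptCondsAt {n : ℕ} {ι κ : Type}
    (Es : Finset ι) (ge : ι → RPoly n) (Is : Finset κ) (gi : κ → RPoly n)
    (F : RPoly n) (u : Fin n → ℝ) : Prop :=
  -- LICQC: gradients of active constraints are linearly independent
  LinearIndependent ℝ
    (Sum.elim
      (fun j : {j : ι // j ∈ Es ∧ eval u (ge j) = 0} => gradP (ge j.1) u)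
      (fun j : {j : κ // j ∈ Is ∧ eval u (gi j) = 0} => gradP (gi j.1) u)) ∧
  ∃ (lamE : ι → ℝ) (lamI : κ → ℝ),
    -- KKT stationarity
    (gradP F u =
      (∑ j ∈ Es, lamE j • gradP (ge j) u) + ∑ j ∈ Is, lamI j • gradP (gi j) u) ∧
    (∀ j ∈ Is, 0 ≤ lamI j ∧ lamI j * eval u (gi j) = 0) ∧
    -- SCC
    (∀ j ∈ Is, 0 < lamI j + eval u (gi j)) ∧
    -- SOSC
    (∀ v : Fin n → ℝ, v ≠ 0 →
      (∀ j ∈ Es, (∑ i, v i * gradP (ge j) u i) = 0) →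
      (∀ j ∈ Is, eval u (gi j) = 0 → (∑ i, v i * gradP (gi j) u i) = 0) →
      0 < ∑ i, ∑ i', v i *
        ((hessP F u i i' - ∑ j ∈ Es, lamE j * hessP (ge j) u i i')
          - ∑ j ∈ Is, lamI j * hessP (gi j) u i i') * v i')

/-- The degree-`ℓ` homogenization `x_0^ℓ p(x/x_0)` of `p`; the new variable `x_0`
is the variable of index `0` in `Fin (n+1)`. -/
def homogAux {n : ℕ} (ℓ : ℕ) (p : RPoly n) : RPoly (n + 1) :=
  ∑ α ∈ p.support,
    monomial
      (Finsupp.single (0 : Fin (n + 1)) (ℓ - mdeg α) + Finsupp.mapDomain Fin.succ α)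
      (p.coeff α)

/-- The homogenization `p̃` of `p`. -/
def homogenize {n : ℕ} (p : RPoly n) : RPoly (n + 1) := homogAux p.totalDegree p

/-- The polynomial `‖x̃‖² - 1`. -/
def sphereP (n : ℕ) : RPoly (n + 1) := (∑ i, (X i : RPoly (n + 1)) ^ 2) - 1

/-- The homogenization `K̃` of the set `K`. -/
def Khom {n : ℕ} (E I : Finset ℕ) (c : ℕ → RPoly n) : Set (Fin (n + 1) → ℝ) :=
  {x | (∀ j ∈ E, eval x (homogenize (c j)) = 0) ∧
       (∀ j ∈ I, 0 ≤ eval x (homogenize (c j))) ∧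
       (∑ i, (x i) ^ 2) = 1 ∧ 0 ≤ x 0}

/-- `K` is closed at infinity. -/
def ClosedAtInfinity {n : ℕ} (E I : Finset ℕ) (c : ℕ → RPoly n) : Prop :=
  Khom E I c = closure (Khom E I c ∩ {x | 0 < x 0})

/-- The tuple `c̃_eq`: the homogenizations `c̃_j` together with `‖x̃‖² - 1`
(the latter indexed by `none`). -/
def gEqH {n : ℕ} (c : ℕ → RPoly n) : Option ℕ → RPoly (n + 1) :=
  fun o => o.elim (sphereP n) (fun j => homogenize (c j))

/-- The tuple `c̃_in`: the homogenizations `c̃_j` together with `x_0`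
(the latter indexed by `none`). -/
def gInH {n : ℕ} (c : ℕ → RPoly n) : Option ℕ → RPoly (n + 1) :=
  fun o => o.elim (X 0) (fun j => homogenize (c j))

/-- The index set of a tuple extended by one extra entry (indexed by `none`). -/
def OS (S : Finset ℕ) : Finset (Option ℕ) := insert none (S.image some)

/-- Feasibility of `θ` for the linear conic problem (P). -/
def PFeas {n m : ℕ} (m1 d : ℕ) (f : RPoly n) (a : Fin m → RPoly n)
    (K : Set (Fin n → ℝ)) (θ : Fin m → ℝ) : Prop :=
  (∀ i : Fin m, m1 ≤ (i : ℕ) → 0 ≤ θ i) ∧ (f - ∑ i, C (θ i) * a i) ∈ PdCone d K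

/-- The optimal value `ϑ*` of the linear conic problem (P). -/
def PVal {n m : ℕ} (m1 d : ℕ) (f : RPoly n) (a : Fin m → RPoly n) (b : Fin m → ℝ)
    (K : Set (Fin n → ℝ)) : ℝ :=
  sSup {v : ℝ | ∃ θ : Fin m → ℝ, PFeas m1 d f a K θ ∧ v = ∑ i, b i * θ i}

/-- Feasibility of `y` for the generalized moment problem (M). -/
def MFeas {n m : ℕ} (m1 d : ℕ) (a : Fin m → RPoly n) (b : Fin m → ℝ)
    (K : Set (Fin n → ℝ)) (y : (Fin n →₀ ℕ) → ℝ) : Prop :=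
  InMomentCone d K y ∧
  (∀ i : Fin m, (i : ℕ) < m1 → pairing (a i) y = b i) ∧
  (∀ i : Fin m, m1 ≤ (i : ℕ) → b i ≤ pairing (a i) y)

/-- The optimal value `φ*` of the generalized moment problem (M). -/
def MVal {n m : ℕ} (m1 d : ℕ) (f : RPoly n) (a : Fin m → RPoly n) (b : Fin m → ℝ)
    (K : Set (Fin n → ℝ)) : ℝ :=
  sInf {v : ℝ | ∃ y : (Fin n →₀ ℕ) → ℝ, MFeas m1 d a b K y ∧ v = pairing f y}

/-- The optimal value `ϑ_k` of the `k`th SOS relaxation of (P). -/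
def SOSRelaxVal {n m : ℕ} {ι κ : Type} (m1 : ℕ) (f : RPoly n) (a : Fin m → RPoly n)
    (b : Fin m → ℝ) (Es : Finset ι) (ge : ι → RPoly n) (Is : Finset κ) (gi : κ → RPoly n)
    (k : ℕ) : ℝ :=
  sSup {v : ℝ | ∃ θ : Fin m → ℝ, (∀ i : Fin m, m1 ≤ (i : ℕ) → 0 ≤ θ i) ∧
      (∃ p1 ∈ IdealDeg Es ge (2 * k), ∃ p2 ∈ QModDeg Is gi (2 * k),
        f - ∑ i, C (θ i) * a i = p1 + p2) ∧
      v = ∑ i, b i * θ i}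

/-- The semidefinite constraints of the `k`th moment relaxation:
the localizing vectors of the equality constraints vanish, and the localizing
matrices of the inequality constraints and the moment matrix are positive
semidefinite (stated equivalently via the associated quadratic forms). -/
def MomRelaxPSD {n : ℕ} {ι κ : Type} (Es : Finset ι) (ge : ι → RPoly n)
    (Is : Finset κ) (gi : κ → RPoly n) (k : ℕ) (w : (Fin n →₀ ℕ) → ℝ) : Prop :=
  (∀ j ∈ Es, ∀ p : RPoly n, p.totalDegree + (ge j).totalDegree ≤ 2 * k →
      pairing (ge j * p) w = 0) ∧
  (∀ j ∈ Is, ∀ p : RPoly n, p.totalDegree + ((gi j).totalDegree + 1) / 2 ≤ k →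
      0 ≤ pairing (gi j * p ^ 2) w) ∧
  (∀ p : RPoly n, p.totalDegree ≤ k → 0 ≤ pairing (p ^ 2) w)

/-- Feasibility of `w` for the `k`th moment relaxation of (M). -/
def GMomFeas {n m : ℕ} {ι κ : Type} (m1 : ℕ) (a : Fin m → RPoly n) (b : Fin m → ℝ)
    (Es : Finset ι) (ge : ι → RPoly n) (Is : Finset κ) (gi : κ → RPoly n) (k : ℕ)
    (w : (Fin n →₀ ℕ) → ℝ) : Prop :=
  (∀ i : Fin m, (i : ℕ) < m1 → pairing (a i) w = b i) ∧
  (∀ i : Fin m, m1 ≤ (i : ℕ) → b i ≤ pairing (a i) w) ∧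
  MomRelaxPSD Es ge Is gi k w

/-- The optimal value `φ_k` of the `k`th moment relaxation of (M). -/
def GMomVal {n m : ℕ} {ι κ : Type} (m1 : ℕ) (f : RPoly n) (a : Fin m → RPoly n)
    (b : Fin m → ℝ) (Es : Finset ι) (ge : ι → RPoly n) (Is : Finset κ) (gi : κ → RPoly n)
    (k : ℕ) : ℝ :=
  sInf {v : ℝ | ∃ w : (Fin n →₀ ℕ) → ℝ,
      GMomFeas m1 a b Es ge Is gi k w ∧ v = pairing f w}

/-- The optimal value `f_k^den` of the `k`th order relaxation with denominators. -/
def DenRelaxVal {n : ℕ} (E I : Finset ℕ) (c : ℕ → RPoly n) (f : RPoly n) (d k : ℕ) : ℝ :=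
  sSup {γ : ℝ | ∃ p1 ∈ IdealDeg E c (2 * k + d), ∃ p2 ∈ QModDeg I c (2 * k + d),
      (1 + ∑ i, (X i : RPoly n) ^ 2) ^ k * (f - C γ) = p1 + p2}


/-- The degree bound `d_K = max_j ⌈deg(c_j)/2⌉`. -/
def dKOrig {n : ℕ} (E I : Finset ℕ) (c : ℕ → RPoly n) : ℕ :=
  (E ∪ I).sup fun j => ((c j).totalDegree + 1) / 2

/-- The degree bound `d_0` for the GMP relaxations. -/
def d0GMP {n m : ℕ} (f : RPoly n) (a : Fin m → RPoly n) (E I : Finset ℕ)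
    (c : ℕ → RPoly n) : ℕ :=
  max ((f.totalDegree + 1) / 2)
    (max (dKOrig E I c) (Finset.univ.sup fun i : Fin m => ((a i).totalDegree + 1) / 2))

/-- The degree bound `d̃_K` for the homogenized constraining tuples. -/
def dKHom {n : ℕ} (E I : Finset ℕ) (c : ℕ → RPoly n) : ℕ :=
  max ((OS E).sup fun o => ((gEqH c o).totalDegree + 1) / 2)
      ((OS I).sup fun o => ((gInH c o).totalDegree + 1) / 2)

end

/-!
Split `λq + (1-λ)p = λ(q - δ) + (1-λ)σ0 + (λδ + (1-λ)h)`. Only the last summand needs an argument: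
by the sum-of-squares form of Bernoulli's inequality, `x ^ (2k) + 2k x + (2k - 1)` is a sum of
squares, and rescaling it gives `w ≥ 0` such that `λδ + (1-λ)h + w h ^ (2k)` is a sum of squares.
The correction `w h ^ (2k) = w (h ^ (2k) + σ1) - w σ1` is then absorbed by the ideal and by `σ1`.
The number `w` blows up as `λ → 0`, but the polynomials multiplied by it do not depend on `λ`, so
all degrees stay bounded.
-/

section SumSq

lemma isSumSq_pow_sub_mul_sq_add {R : Type*} [CommRing R] (x : R) (k : ℕ) :
    IsSumSq (x ^ (2 * k) - k * x ^ 2 + (k - 1)) := by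
  induction k with
  | zero => simp
  | succ k ih =>
    have hstep : x ^ (2 * (k + 1)) - ((k + 1 : ℕ) : R) * x ^ 2 + (((k + 1 : ℕ) : R) - 1) =
        x ^ 2 * (x ^ (2 * k) - k * x ^ 2 + (k - 1)) + k * (x ^ 2 - 1) ^ 2 := by
      push_cast
      ring
    rw [hstep]
    exact ((IsSquare.sq x).isSumSq.mul ih).add
      ((IsSumSq.natCast k).mul (IsSquare.sq (x ^ 2 - 1)).isSumSq)

lemma isSumSq_pow_add_two_mul_mul_add {R : Type*} [CommRing R] (x : R) (k : ℕ) :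
    IsSumSq (x ^ (2 * k) + 2 * k * x + (2 * k - 1)) := by
  have hsplit : x ^ (2 * k) + 2 * k * x + (2 * k - 1) =
      (x ^ (2 * k) - k * x ^ 2 + (k - 1)) + k * (x + 1) ^ 2 := by ring
  rw [hsplit]
  exact (isSumSq_pow_sub_mul_sq_add x k).add
    ((IsSumSq.natCast k).mul (IsSquare.sq (x + 1)).isSumSq)

variable {A : Type*} [CommRing A] [Algebra ℝ A]

lemma isSumSq_smul {r : ℝ} (hr : 0 ≤ r) {s : A} (hs : IsSumSq s) : IsSumSq (r • s) := by
  rw [Algebra.smul_def, ← Real.sq_sqrt hr, map_pow]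
  exact (IsSquare.sq _).isSumSq.mul hs

lemma exists_isSumSq_smul_one_add_smul_add_smul_pow {a : ℝ} (ha : 0 < a) (b : ℝ) {k : ℕ}
    (hk : 1 ≤ k) :
    ∃ w : ℝ, 0 ≤ w ∧ ∀ x : A, IsSumSq (a • (1 : A) + b • x + w • x ^ (2 * k)) := by
  have hk' : (1 : ℝ) ≤ k := by exact_mod_cast hk
  have hm : 0 < 2 * (k : ℝ) - 1 := by linarith
  set u : ℝ := a / (2 * k - 1) with hu
  have hu_pos : 0 < u := by positivity
  set r : ℝ := b / (2 * k * u) with hr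
  have hconst : u * (2 * k - 1) = a := by rw [hu]; field_simp
  have hlin : u * (2 * k * r) = b := by rw [hr]; field_simp
  refine ⟨u * r ^ (2 * k), mul_nonneg hu_pos.le ((even_two_mul k).pow_nonneg r), fun x => ?_⟩
  have hscale : a • (1 : A) + b • x + (u * r ^ (2 * k)) • x ^ (2 * k) =
      u • ((r • x) ^ (2 * k) + 2 * k * (r • x) + (2 * k - 1)) := by
    rw [← hconst, ← hlin]
    simp only [Algebra.smul_def, map_mul, map_sub, map_pow, map_natCast, map_ofNat, map_one]
    ring
  rw [hscale]
  exact isSumSq_smul hu_pos.le (isSumSq_pow_add_two_mul_mul_add (r • x) k)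

end SumSq

section TotalDegree

variable {τ R : Type*} [CommSemiring R] {d : ℕ}

lemma totalDegree_add_le_of_le {p q : MvPolynomial τ R} (hp : p.totalDegree ≤ d)
    (hq : q.totalDegree ≤ d) : (p + q).totalDegree ≤ d :=
  (totalDegree_add p q).trans (max_le hp hq)

lemma totalDegree_smul_one_add_smul_add_smul_pow_le {m : ℕ} (hm : 1 ≤ m) {h : MvPolynomial τ R}
    (hd : m * h.totalDegree ≤ d) (a b w : R) :
    (a • (1 : MvPolynomial τ R) + b • h + w • h ^ m).totalDegree ≤ d := by
  refine totalDegree_add_le_of_le (totalDegree_add_le_of_le ?_ ?_) ?_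
  · exact (totalDegree_smul_le a 1).trans (by simp)
  · exact (totalDegree_smul_le b h).trans ((Nat.le_mul_of_pos_left _ hm).trans hd)
  · exact (totalDegree_smul_le w _).trans ((totalDegree_pow h m).trans hd)

end TotalDegree

section Truncations

variable {n k : ℕ} {p q : RPoly n}

lemma isSOS_iff_isSumSq : IsSOS p ↔ IsSumSq p := by
  constructor
  · rintro ⟨L, rfl⟩
    induction L with
    | nil => simp
    | cons x L ih => simpa [sq] using (IsSumSq.mul_self x).add ih
  · intro hp
    induction hp with
    | zero => exact ⟨[], by simp⟩
    | sq_add x _ ih =>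
      obtain ⟨L, rfl⟩ := ih
      exact ⟨x :: L, by simp [sq]⟩

lemma IsSOS.add (hp : IsSOS p) (hq : IsSOS q) : IsSOS (p + q) :=
  isSOS_iff_isSumSq.2 ((isSOS_iff_isSumSq.1 hp).add (isSOS_iff_isSumSq.1 hq))

lemma IsSOS.smul {r : ℝ} (hr : 0 ≤ r) (hp : IsSOS p) : IsSOS (r • p) :=
  isSOS_iff_isSumSq.2 (isSumSq_smul hr (isSOS_iff_isSumSq.1 hp))

variable {κ : Type} {S : Finset κ} {g : κ → RPoly n}

lemma QModDeg.add_mem (hp : p ∈ QModDeg S g k) (hq : q ∈ QModDeg S g k) :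
    p + q ∈ QModDeg S g k := by
  obtain ⟨s, σ, hs, hs_deg, hσ, rfl⟩ := hp
  obtain ⟨t, τ, ht, ht_deg, hτ, rfl⟩ := hq
  refine ⟨s + t, σ + τ, hs.add ht, totalDegree_add_le_of_le hs_deg ht_deg, fun j hj => ?_, ?_⟩
  · have hdeg := totalDegree_add (σ j) (τ j)
    have hσj := hσ j hj
    have hτj := hτ j hj
    exact ⟨hσj.1.add hτj.1, by simp only [Pi.add_apply]; omega⟩
  · simp only [Pi.add_apply, mul_add, Finset.sum_add_distrib]
    ring

lemma QModDeg.smul_mem {r : ℝ} (hr : 0 ≤ r) (hp : p ∈ QModDeg S g k) :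
    r • p ∈ QModDeg S g k := by
  obtain ⟨s, σ, hs, hs_deg, hσ, rfl⟩ := hp
  refine ⟨r • s, r • σ, hs.smul hr, (totalDegree_smul_le r s).trans hs_deg, fun j hj => ?_, ?_⟩
  · exact ⟨(hσ j hj).1.smul hr,
      (Nat.add_le_add_right (totalDegree_smul_le r (σ j)) _).trans (hσ j hj).2⟩
  · simp only [Pi.smul_apply, mul_smul_comm, smul_add, Finset.smul_sum]

lemma QModDeg.add_isSOS_mem (hp : p ∈ QModDeg S g k) (hq : IsSOS q) (hq_deg : q.totalDegree ≤ k) :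
    p + q ∈ QModDeg S g k := by
  obtain ⟨s, σ, hs, hs_deg, hσ, rfl⟩ := hp
  exact ⟨s + q, σ, hs.add hq, totalDegree_add_le_of_le hs_deg hq_deg, hσ, by ring⟩

lemma eventually_mem_QModDeg (hp : p ∈ QModFull S g) :
    ∀ᶠ k in Filter.atTop, p ∈ QModDeg S g k := by
  obtain ⟨s, σ, hs, hσ, rfl⟩ := hp
  have hσ_deg : ∀ᶠ k in Filter.atTop, ∀ j ∈ S, (σ j).totalDegree + (g j).totalDegree ≤ k :=
    (Filter.eventually_all_finset S).2 fun j _ => Filter.eventually_ge_atTop _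
  filter_upwards [Filter.eventually_ge_atTop s.totalDegree, hσ_deg] with k hk hσk
  exact ⟨s, σ, hs, hk, fun j hj => ⟨hσ j hj, hσk j hj⟩, rfl⟩

lemma IdealDeg.add_mem (hp : p ∈ IdealDeg S g k) (hq : q ∈ IdealDeg S g k) :
    p + q ∈ IdealDeg S g k := by
  obtain ⟨a, ha, rfl⟩ := hp
  obtain ⟨b, hb, rfl⟩ := hq
  refine ⟨a + b, fun j hj => ?_, by simp only [Pi.add_apply, mul_add, Finset.sum_add_distrib]⟩
  have hdeg := totalDegree_add (a j) (b j)
  have haj := ha j hj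
  have hbj := hb j hj
  simp only [Pi.add_apply]
  omega

lemma IdealDeg.smul_mem (r : ℝ) (hp : p ∈ IdealDeg S g k) : r • p ∈ IdealDeg S g k := by
  obtain ⟨a, ha, rfl⟩ := hp
  refine ⟨r • a, fun j hj => ?_, by simp only [Pi.smul_apply, mul_smul_comm, Finset.smul_sum]⟩
  exact (Nat.add_le_add_right (totalDegree_smul_le r (a j)) _).trans (ha j hj)

lemma eventually_mem_IdealDeg (hp : p ∈ IdealFull S g) :
    ∀ᶠ k in Filter.atTop, p ∈ IdealDeg S g k := by
  obtain ⟨a, rfl⟩ := (Submodule.mem_span_image_finset_iff_exists_fun' (RPoly n)).1 hp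
  have ha_deg : ∀ᶠ k in Filter.atTop, ∀ j ∈ S, (a j).totalDegree + (g j).totalDegree ≤ k :=
    (Filter.eventually_all_finset S).2 fun j _ => Filter.eventually_ge_atTop _
  filter_upwards [ha_deg] with k hk
  exact ⟨a, hk, by simp only [smul_eq_mul, mul_comm]⟩

end Truncations

section ConvexCombination

variable {n k m : ℕ} {h σ : RPoly n} {ι κ : Type} {E : Finset ι} {e : ι → RPoly n}
  {I : Finset κ} {g : κ → RPoly n}

lemma exists_smul_one_add_smul_add_eq_of_pow_add_mem_IdealDeg (hm : 1 ≤ m) (hσ : IsSOS σ)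
    (hmem : h ^ (2 * m) + σ ∈ IdealDeg E e k) (hh_deg : 2 * m * h.totalDegree ≤ k)
    (hσ_deg : σ.totalDegree ≤ k) {a : ℝ} (ha : 0 < a) (b : ℝ) :
    ∃ p₁ ∈ IdealDeg E e k, ∃ s : RPoly n, IsSOS s ∧ s.totalDegree ≤ k ∧
      a • (1 : RPoly n) + b • h = p₁ + s := by
  obtain ⟨w, hw, hsos⟩ := exists_isSumSq_smul_one_add_smul_add_smul_pow (A := RPoly n) ha b hm
  refine ⟨-w • (h ^ (2 * m) + σ), IdealDeg.smul_mem _ hmem,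
    (a • 1 + b • h + w • h ^ (2 * m)) + w • σ, ?_, ?_, by module⟩
  · exact (isSOS_iff_isSumSq.2 (hsos h)).add (hσ.smul hw)
  · exact totalDegree_add_le_of_le
      (totalDegree_smul_one_add_smul_add_smul_pow_le (by omega) hh_deg a b w)
      ((totalDegree_smul_le w σ).trans hσ_deg)

lemma eventually_forall_smul_add_smul_eq (hm : 1 ≤ m) (hσ : IsSOS σ)
    (hmem : h ^ (2 * m) + σ ∈ IdealFull E e) {σ₀ i s : RPoly n} (hσ₀ : σ₀ ∈ QModFull I g)
    (hi : i ∈ IdealFull E e) (hs : s ∈ QModFull I g) {δ : ℝ} (hδ : 0 < δ) :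
    ∀ᶠ k in Filter.atTop, ∀ t : ℝ, 0 < t → t ≤ 1 →
      ∃ p₁ ∈ IdealDeg E e k, ∃ p₂ ∈ QModDeg I g k,
        t • (i + s + C δ) + (1 - t) • (h + σ₀) = p₁ + p₂ := by
  filter_upwards [eventually_mem_IdealDeg hmem, eventually_mem_QModDeg hσ₀,
    eventually_mem_IdealDeg hi, eventually_mem_QModDeg hs,
    Filter.eventually_ge_atTop (2 * m * h.totalDegree), Filter.eventually_ge_atTop σ.totalDegree]
    with k hmem hσ₀ hi hs hh_deg hσ_deg t ht_pos ht_le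
  obtain ⟨p₁, hp₁, s', hs', hs'_deg, heq⟩ :=
    exists_smul_one_add_smul_add_eq_of_pow_add_mem_IdealDeg hm hσ hmem hh_deg hσ_deg
      (mul_pos ht_pos hδ) (1 - t)
  have hqm : t • s + (1 - t) • σ₀ ∈ QModDeg I g k :=
    QModDeg.add_mem (QModDeg.smul_mem ht_pos.le hs) (QModDeg.smul_mem (sub_nonneg.2 ht_le) hσ₀)
  refine ⟨t • i + p₁, IdealDeg.add_mem (IdealDeg.smul_mem t hi) hp₁,
    t • s + (1 - t) • σ₀ + s', QModDeg.add_isSOS_mem hqm hs' hs'_deg, ?_⟩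
  have hC : (C δ : RPoly n) = δ • 1 := by rw [smul_eq_C_mul, mul_one]
  calc t • (i + s + C δ) + (1 - t) • (h + σ₀)
      = t • i + (t • s + (1 - t) • σ₀) + ((t * δ) • 1 + (1 - t) • h) := by rw [hC]; module
    _ = t • i + p₁ + (t • s + (1 - t) • σ₀ + s') := by rw [heq]; abel

end ConvexCombination

/-- the key algebraic lemma in the proof of Theorem 3.2: a uniform
degree bound `k0` such that `λq + (1-λ)p` lies in the truncated sum
`Ideal(c_eq)_{2k0} + QM(c_in)_{2k0}` for all `0 < λ ≤ 1`. -/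
theorem statement_11
    (n : ℕ) (E I : Finset ℕ) (hEI : Disjoint E I) (c : ℕ → RPoly n)
    (p q σ0 : RPoly n) (hσ0 : σ0 ∈ QModFull I c)
    (h : RPoly n) (hh : h = p - σ0)
    -- (a) h^{2k1} + σ1 ∈ Ideal(c_eq)
    (k1 : ℕ) (hk1 : 1 ≤ k1) (σ1 : RPoly n) (hσ1 : IsSOS σ1)
    (hmem : h ^ (2 * k1) + σ1 ∈ IdealFull E c)
    -- (b) q - δ ∈ Ideal(c_eq) + QM(c_in)
    (δ : ℝ) (hδ : 0 < δ)
    (hq : ∃ p1 ∈ IdealFull E c, ∃ p2 ∈ QModFull I c, q - C δ = p1 + p2) :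
    ∃ k0 : ℕ, ∀ lam : ℝ, 0 < lam → lam ≤ 1 →
      ∃ p1 ∈ IdealDeg E c (2 * k0), ∃ p2 ∈ QModDeg I c (2 * k0),
        C lam * q + C (1 - lam) * p = p1 + p2 := by
  obtain ⟨i, hi, s, hs, hqδ⟩ := hq
  have hp_eq : p = h + σ0 := by rw [hh, sub_add_cancel]
  have hq_eq : q = i + s + C δ := sub_eq_iff_eq_add.1 hqδ
  simp only [C_mul', hp_eq, hq_eq]
  have hev := eventually_forall_smul_add_smul_eq hk1 hσ1 hmem hσ0 hi hs hδ
  exact ((Filter.tendsto_id.const_mul_atTop' two_pos).eventually hev).exists
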